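/- Let R be a commutative ring and let I and J be finitely generated ideals of R. Then Loc(R/I, R/J) = Loc(R/I ⊕ R/J) = Loc(R/(I·J)) = Loc(R/(I ∩ J)) in D(R). -/

import Mathlib

open CategoryTheory CategoryTheory.Limits CategoryTheory.Pretriangulated ZeroObject

universe w w' v u

section TriangulatedDefs

variable {T : Type u} [Category.{v} T] [Preadditive T] [HasZeroObject T]
  [HasShift T ℤ] [∀ n : ℤ, (shiftFunctor T n).Additive] [Pretriangulated T]

/-- A localizing subcategory of a (pre)triangulated category, encoded as a set of
objects: it is closed under isomorphisms, contains the zero object, is stable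
under shifts, closed under cones of distinguished triangles (hence a full
triangulated subcategory), and closed under arbitrary small coproducts
(phrased via colimit cofans, so that no global existence of coproducts
is needed). -/
structure IsLocalizingSub (S : Set T) : Prop where
  zero_mem : (0 : T) ∈ S
  mem_of_iso : ∀ {x y : T}, (x ≅ y) → x ∈ S → y ∈ S
  shift_mem : ∀ (n : ℤ) {x : T}, x ∈ S → x⟦n⟧ ∈ S
  cone_mem : ∀ (Tr : Triangle T), Tr ∈ distinguishedTriangles →
    Tr.obj₁ ∈ S → Tr.obj₂ ∈ S → Tr.obj₃ ∈ S
  coprod_mem : ∀ {ι : Type w} (f : ι → T) (c : Cofan f), IsColimit c →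
    (∀ i, f i ∈ S) → c.pt ∈ S

/-- A colocalizing subcategory: as `IsLocalizingSub` but with products instead
of coproducts. -/
structure IsColocalizingSub (S : Set T) : Prop where
  zero_mem : (0 : T) ∈ S
  mem_of_iso : ∀ {x y : T}, (x ≅ y) → x ∈ S → y ∈ S
  shift_mem : ∀ (n : ℤ) {x : T}, x ∈ S → x⟦n⟧ ∈ S
  cone_mem : ∀ (Tr : Triangle T), Tr ∈ distinguishedTriangles →
    Tr.obj₁ ∈ S → Tr.obj₂ ∈ S → Tr.obj₃ ∈ S
  prod_mem : ∀ {ι : Type w} (f : ι → T) (c : Fan f), IsLimit c →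
    (∀ i, f i ∈ S) → c.pt ∈ S

/-- `Loc S`: the smallest localizing subcategory containing the set of
objects `S` (the intersection of all localizing subcategories containing it). -/
def Loc (S : Set T) : Set T :=
  ⋂₀ {L : Set T | IsLocalizingSub.{w} L ∧ S ⊆ L}

/-- The right orthogonal of a set of objects. -/
def rightOrth (C : Set T) : Set T :=
  {x : T | ∀ ⦃c : T⦄, c ∈ C → ∀ (g : c ⟶ x), g = 0}

end TriangulatedDefs

section CompactDefs

variable {T : Type u} [Category.{v} T] [Preadditive T]

/-- The canonical comparison map `⨁ᵢ Hom(x, fᵢ) →+ Hom(x, ∐ f)` associated to a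
cofan `c` on a family `f`. -/
noncomputable def cofanHomComparison {ι : Type w} (x : T) (f : ι → T) (c : Cofan f) :
    (Π₀ i, (x ⟶ f i)) →+ (x ⟶ c.pt) :=
  letI := Classical.decEq ι
  DFinsupp.sumAddHom (fun i => AddMonoidHom.mk' (fun φ => φ ≫ c.inj i)
    (fun φ ψ => Preadditive.add_comp _ _ _ φ ψ (c.inj i)))

/-- An object `x` is compact if `Hom(x, -)` commutes with arbitrary small
coproducts, i.e. for every colimit cofan on a family `f`, the canonical map
`⨁ᵢ Hom(x, fᵢ) → Hom(x, ∐ f)` is bijective. -/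
def IsCompactObj (x : T) : Prop :=
  ∀ ⦃ι : Type w⦄ (f : ι → T) (c : Cofan f), IsColimit c →
    Function.Bijective (cofanHomComparison x f c)

end CompactDefs

section DR

variable (R : Type u) [CommRing R] [HasDerivedCategory.{w'} (ModuleCat.{u} R)]

/-- The `R`-module `M`, regarded as an object of the derived category `D(R)`,
as a complex concentrated in degree `0`. -/
noncomputable def smod (M : ModuleCat.{u} R) : DerivedCategory (ModuleCat.{u} R) :=
  (DerivedCategory.singleFunctor (ModuleCat.{u} R) 0).obj M

end DR

/-!
If `I * J ≤ K ≤ I ⊓ J`, then `R ⧸ K` is an extension of `R ⧸ I` by a module annihilated by `J`,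
while `R ⧸ I` and `R ⧸ J` are annihilated by `K`. So the point is that a module `M` annihilated by
an ideal `I` lies in `Loc (R ⧸ I)`. Such an `M` has a resolution by direct sums of copies of
`R ⧸ I`. Its syzygies `Kₙ` give a sequence `M ⟶ K₁[1] ⟶ K₂[2] ⟶ ⋯` of connecting maps whose cones
lie in `Loc (R ⧸ I)`. These maps vanish on homology, so the homotopy colimit of the sequence is
zero; on the other hand the cone of the map from `M` to it lies in `Loc (R ⧸ I)`, and therefore so
does `M`.

A direct summand `N` of `M ⊕ N` is treated in the same way, using the resolution
`⋯ ⟶ M ⊕ N ⟶ M ⊕ N ⟶ N` whose syzygies alternate between `M` and `N`.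
-/

section HomologyColimits

lemma mapHomologyIso_inv_naturality_natTrans {C D : Type*} [Category* C] [Category* D]
    [HasZeroMorphisms C] [HasZeroMorphisms D] [CategoryWithHomology C] [CategoryWithHomology D]
    {F G : C ⥤ D} [F.PreservesZeroMorphisms] [G.PreservesZeroMorphisms]
    [F.PreservesHomology] [G.PreservesHomology] (τ : F ⟶ G) (S : ShortComplex C) :
    τ.app S.homology ≫ (S.mapHomologyIso G).inv =
      (S.mapHomologyIso F).inv ≫ ShortComplex.homologyMap (S.mapNatTrans τ) := by
  rw [Iso.comp_inv_eq, Category.assoc]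
  exact NatTrans.app_homology τ S

variable {A : Type*} [Category* A] {J : Type*} [Category* J] [HasColimitsOfShape J A]

/-- The canonical natural transformation from evaluation at `j` to the colimit functor. -/
noncomputable def evaluationToColim (j : J) : (evaluation J A).obj j ⟶ colim where
  app F := colimit.ι F j

variable [Abelian A]

/-- The colimit cocone of a diagram of short complexes `S`, encoded as a short complex of diagrams,
with point the image of `S` under `colim`. -/
noncomputable def shortComplexColimitCocone (S : ShortComplex (J ⥤ A)) :
    Cocone ((ShortComplex.functorEquivalence J A).functor.obj S) where
  pt := S.map colim
  ι :=
    { app j := S.mapNatTrans (evaluationToColim j)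
      naturality i j a := by
        ext
        · exact (colimit.w S.X₁ a).trans (Category.comp_id _).symm
        · exact (colimit.w S.X₂ a).trans (Category.comp_id _).symm
        · exact (colimit.w S.X₃ a).trans (Category.comp_id _).symm }

variable {κ : Type*} (c : ComplexShape κ) (k : κ)

instance : PreservesColimitsOfShape J (HomologicalComplex.shortComplexFunctor A c k) where
  preservesColimit := ⟨fun h => ⟨ShortComplex.isColimitOfIsColimitπ _
    (isColimitOfPreserves (HomologicalComplex.eval A c (c.prev k)) h)
    (isColimitOfPreserves (HomologicalComplex.eval A c k) h)
    (isColimitOfPreserves (HomologicalComplex.eval A c (c.next k)) h)⟩⟩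

variable [HasExactColimitsOfShape J A]

lemma preservesColimit_shortComplexHomologyFunctor (S : ShortComplex (J ⥤ A)) :
    PreservesColimit ((ShortComplex.functorEquivalence J A).functor.obj S)
      (ShortComplex.homologyFunctor A) := by
  let α : S.homology ≅
      (ShortComplex.functorEquivalence J A).functor.obj S ⋙ ShortComplex.homologyFunctor A :=
    NatIso.ofComponents (fun j => (S.mapHomologyIso ((evaluation J A).obj j)).symm)
      (fun a => mapHomologyIso_inv_naturality_natTrans ((evaluation J A).map a) S)
  have isColimit_cocone : IsColimit (shortComplexColimitCocone S) :=
    ShortComplex.isColimitOfIsColimitπ _ (colimit.isColimit S.X₁) (colimit.isColimit S.X₂)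
      (colimit.isColimit S.X₃)
  have ι_comp_mapHomologyIso_inv (j : J) :
      colimit.ι S.homology j ≫ (S.mapHomologyIso colim).inv =
        α.hom.app j ≫ ShortComplex.homologyMap (S.mapNatTrans (evaluationToColim j)) :=
    mapHomologyIso_inv_naturality_natTrans (evaluationToColim j) S
  let e : colimit S.homology ≅ (S.map colim).homology := (S.mapHomologyIso colim).symm
  let isoCocone : (Cocone.precompose α.inv).obj (colimit.cocone S.homology) ≅
      (ShortComplex.homologyFunctor A).mapCocone (shortComplexColimitCocone S) :=
    Cocone.ext e fun j =>
      (Category.assoc _ _ _).trans ((Iso.inv_comp_eq (α.app j)).2 (ι_comp_mapHomologyIso_inv j))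
  exact preservesColimit_of_preserves_colimit_cocone isColimit_cocone
    (IsColimit.equivOfNatIsoOfIso α _ _ isoCocone (colimit.isColimit S.homology))

instance : PreservesColimitsOfShape J (ShortComplex.homologyFunctor A) where
  preservesColimit {K} :=
    have : PreservesColimit ((ShortComplex.functorEquivalence J A).inverse ⋙
        (ShortComplex.functorEquivalence J A).functor |>.obj K) (ShortComplex.homologyFunctor A) :=
      preservesColimit_shortComplexHomologyFunctor _
    preservesColimit_of_iso_diagram _ ((ShortComplex.functorEquivalence J A).counitIso.app K)

instance : PreservesColimitsOfShape J (HomologicalComplex.homologyFunctor A c k) :=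
  preservesColimitsOfShape_of_natIso (HomologicalComplex.homologyFunctorIso A c k).symm

end HomologyColimits

section DerivedCategoryCoproducts

open DerivedCategory

lemma quasiIso_colimMap {A : Type*} [Category* A] [Abelian A] {J : Type*} [Category* J]
    [HasColimitsOfShape J A] [HasExactColimitsOfShape J A] {κ : Type*} {c : ComplexShape κ}
    {K L : J ⥤ HomologicalComplex A c} (φ : K ⟶ L) [∀ j, QuasiIso (φ.app j)] :
    QuasiIso (colimMap φ) := by
  rw [quasiIso_iff]
  intro k
  rw [quasiIsoAt_iff_isIso_homologyMap]
  let H := HomologicalComplex.homologyFunctor A c k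
  have hK := isColimitOfPreserves H (colimit.isColimit K)
  have hL := isColimitOfPreserves H (colimit.isColimit L)
  have (j : J) : IsIso ((Functor.whiskerRight φ H).app j) :=
    inferInstanceAs (IsIso (HomologicalComplex.homologyMap (φ.app j) k))
  have := NatIso.isIso_of_isIso_app (Functor.whiskerRight φ H)
  have colimMap_eq : H.map (colimMap φ) =
      (hK.coconePointsIsoOfNatIso hL (asIso (Functor.whiskerRight φ H))).hom :=
    hK.hom_ext fun j => by
      rw [IsColimit.comp_coconePointsIsoOfNatIso_hom]
      simp [← Functor.map_comp]
  change IsIso (H.map (colimMap φ))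
  rw [colimMap_eq]
  infer_instance

variable {A : Type*} [Category* A] [Abelian A] [HasDerivedCategory.{w'} A] {ι : Type*}

lemma exists_comp_Q_iso (F : Discrete ι ⥤ DerivedCategory A) :
    ∃ K : Discrete ι ⥤ CochainComplex A ℤ, Nonempty (K ⋙ Q ≅ F) :=
  ⟨Discrete.functor fun i => Q.objPreimage (F.obj ⟨i⟩),
    ⟨Discrete.natIso fun i => Q.objObjPreimageIso (F.obj i)⟩⟩

variable [HasColimitsOfShape (Discrete ι) A] [HasExactColimitsOfShape (Discrete ι) A]

instance (k : ℤ) : PreservesColimitsOfShape (Discrete ι) (Q ⋙ homologyFunctor A k) :=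
  preservesColimitsOfShape_of_natIso (homologyFunctorFactors A k).symm

lemma isIso_of_Q_map_ι_comp_eq {K : ι → CochainComplex A ℤ} (φ : Q.obj (∐ K) ⟶ Q.obj (∐ K))
    (hφ : ∀ i, Q.map (Limits.Sigma.ι K i) ≫ φ = Q.map (Limits.Sigma.ι K i)) : IsIso φ := by
  rw [DerivedCategory.isIso_iff]
  intro k
  have homology_map_eq_id : (homologyFunctor A k).map φ = 𝟙 _ :=
    (isColimitOfPreserves (Q ⋙ homologyFunctor A k) (coproductIsCoproduct K)).hom_ext fun ⟨i⟩ =>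
      ((homologyFunctor A k).map_comp _ _).symm.trans
        ((congrArg (homologyFunctor A k).map (hφ i)).trans (Category.comp_id _).symm)
  rw [homology_map_eq_id]
  infer_instance

lemma exists_Q_map_ι_comp_eq {K : ι → CochainComplex A ℤ} {Y : DerivedCategory A}
    (f : ∀ i, Q.obj (K i) ⟶ Y) :
    ∃ g : Q.obj (∐ K) ⟶ Y, ∀ i, Q.map (Limits.Sigma.ι K i) ≫ g = f i := by
  let e := Q.objObjPreimageIso Y
  choose X s hs a ha using fun i => right_fac (f i ≫ e.inv)
  have : QuasiIso (Limits.Sigma.map s) := by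
    let τ : Discrete.functor X ⟶ Discrete.functor K := Discrete.natTrans fun i => s i.as
    have (j : Discrete ι) : QuasiIso (τ.app j) := (isIso_Q_map_iff_quasiIso _ _).1 (hs j.as)
    exact quasiIso_colimMap τ
  refine ⟨inv (Q.map (Limits.Sigma.map s)) ≫ Q.map (Limits.Sigma.desc a) ≫ e.hom, fun i => ?_⟩
  have ι_comp_inv : Q.map (Limits.Sigma.ι K i) ≫ inv (Q.map (Limits.Sigma.map s)) =
      inv (Q.map (s i)) ≫ Q.map (Limits.Sigma.ι X i) := by
    rw [IsIso.comp_inv_eq, Category.assoc, ← Q.map_comp, Limits.Sigma.ι_map, Q.map_comp,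
      IsIso.inv_hom_id_assoc]
  rw [reassoc_of% ι_comp_inv, ← Q.map_comp_assoc, Limits.Sigma.ι_desc, ← Category.assoc, ← ha,
    Category.assoc, Iso.inv_hom_id, Category.comp_id]

lemma eq_zero_of_Q_map_ι_comp_eq_zero {K : ι → CochainComplex A ℤ} {Y : DerivedCategory A}
    (φ : Q.obj (∐ K) ⟶ Y) (hφ : ∀ i, Q.map (Limits.Sigma.ι K i) ≫ φ = 0) : φ = 0 := by
  obtain ⟨Z, h, δ, hT⟩ := distinguished_cocone_triangle₁ φ
  -- The `Q (K i)` lift to the fibre `Z` of `φ`; assembled, the lifts split `Z ⟶ Q (∐ K)`.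
  have ι_factors (i : ι) : ∃ a : Q.obj (K i) ⟶ Z, Q.map (Limits.Sigma.ι K i) = a ≫ h :=
    Triangle.coyoneda_exact₂ _ hT _ (hφ i)
  choose a ha using ι_factors
  obtain ⟨g, hg⟩ := exists_Q_map_ι_comp_eq a
  have : IsIso (g ≫ h) := isIso_of_Q_map_ι_comp_eq _ fun i => by
    rw [← Category.assoc, hg]
    exact (ha i).symm
  have h_comp_φ : h ≫ φ = 0 := comp_distTriang_mor_zero₁₂ _ hT
  rw [← cancel_epi (g ≫ h), Category.assoc, h_comp_φ, comp_zero, comp_zero]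

lemma Q_sigma_hom_ext {K : ι → CochainComplex A ℤ} {Y : DerivedCategory A}
    {f g : Q.obj (∐ K) ⟶ Y}
    (h : ∀ i, Q.map (Limits.Sigma.ι K i) ≫ f = Q.map (Limits.Sigma.ι K i) ≫ g) : f = g :=
  sub_eq_zero.1 <| eq_zero_of_Q_map_ι_comp_eq_zero _ fun i => by
    rw [Preadditive.comp_sub, sub_eq_zero, h i]

instance (K : ι → CochainComplex A ℤ) :
    PreservesColimit (Discrete.functor K) (Q : _ ⥤ DerivedCategory A) :=
  preservesColimit_of_preserves_colimit_cocone (coproductIsCoproduct K) <|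
    IsColimit.ofExistsUnique fun s => by
      obtain ⟨g, hg⟩ := exists_Q_map_ι_comp_eq fun i => s.ι.app ⟨i⟩
      exact ⟨g, fun ⟨i⟩ => hg i,
        fun g' hg' => Q_sigma_hom_ext fun i => (hg' ⟨i⟩).trans (hg i).symm⟩

instance : PreservesColimitsOfShape (Discrete ι) (Q : CochainComplex A ℤ ⥤ DerivedCategory A) :=
  preservesColimitsOfShape_of_discrete _

instance : HasColimitsOfShape (Discrete ι) (DerivedCategory A) where
  has_colimit F := by
    obtain ⟨K, ⟨e⟩⟩ := exists_comp_Q_iso F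
    exact hasColimit_of_iso e.symm

instance (k : ℤ) : PreservesColimitsOfShape (Discrete ι) (homologyFunctor A k) where
  preservesColimit {F} := by
    obtain ⟨K, ⟨e⟩⟩ := exists_comp_Q_iso F
    have : PreservesColimit (K ⋙ Q) (homologyFunctor A k) :=
      preservesColimit_of_preserves_colimit_cocone
        (isColimitOfPreserves Q (colimit.isColimit K))
        (isColimitOfPreserves (Q ⋙ homologyFunctor A k) (colimit.isColimit K))
    exact preservesColimit_of_iso_diagram _ e

instance (n : ℤ) : PreservesColimitsOfShape (Discrete ι) (singleFunctor A n) :=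
  have : PreservesColimitsOfShape (Discrete ι) (CochainComplex.singleFunctor A n) :=
    inferInstanceAs (PreservesColimitsOfShape _ (HomologicalComplex.single A (.up ℤ) n))
  preservesColimitsOfShape_of_natIso (singleFunctorIsoCompQ A n).symm

end DerivedCategoryCoproducts

section Telescope

section Localization

variable {T : Type*} [Category* T] [Preadditive T] [HasZeroObject T] [HasShift T ℤ]
  [∀ n : ℤ, (shiftFunctor T n).Additive] [Pretriangulated T] (P : ObjectProperty T)
  [P.IsTriangulated]

lemma trW_of_trW_postcomp [IsTriangulated T] {X Y Z : T} {f : X ⟶ Y} {g : Y ⟶ Z} (hg : P.trW g)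
    (hfg : P.trW (f ≫ g)) : P.trW f := by
  rw [← P.trW_isoClosure] at hg hfg ⊢
  obtain ⟨_, _, _, hT₂₃, hP₂₃⟩ := hg
  obtain ⟨_, _, _, hT₁₃, hP₁₃⟩ := hfg
  obtain ⟨_, _, _, hT₁₂⟩ := distinguished_cocone_triangle f
  let octahedron := Triangulated.someOctahedron rfl hT₁₂ hT₂₃ hT₁₃
  exact ⟨_, _, _, hT₁₂,
    P.isoClosure.ext_of_isTriangulatedClosed₁ _ octahedron.mem hP₁₃ hP₂₃⟩

open Opposite Pretriangulated.Opposite in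
instance {ι : Type*} [HasColimitsOfShape (Discrete ι) T]
    [P.IsClosedUnderColimitsOfShape (Discrete ι)] : P.trW.IsStableUnderCoproductsOfShape ι := by
  refine MorphismProperty.IsStableUnderCoproductsOfShape.mk _ _ fun X Y _ _ f hf => ?_
  have : P.IsClosedUnderColimitsOfShape (Discrete ι)ᵒᵖ :=
    .of_equivalence (Discrete.opposite ι).symm
  have trW_op_f (i : ι) : P.op.trW (f i).op := P.trW_op_iff.2 (hf i)
  choose Z a b hT hZ using trW_op_f
  have trW_pi : P.op.trW (Limits.Pi.map fun i => (f i).op) :=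
    ObjectProperty.trW.mk _ (productTriangle_distinguished _ hT) (P.op.prop_pi _ hZ)
  refine P.trW_of_op ((P.op.trW.arrow_mk_iso_iff (Arrow.isoMk (opCoproductIsoProduct Y).symm
    (opCoproductIsoProduct X).symm ?_)).1 trW_pi)
  change (opCoproductIsoProduct Y).inv ≫ (Limits.Sigma.map f).op =
    Limits.Pi.map (fun i => (f i).op) ≫ (opCoproductIsoProduct X).inv
  rw [Iso.inv_comp_eq, ← Category.assoc, Iso.eq_comp_inv]
  refine Pi.hom_ext _ _ fun i => ?_
  rw [Category.assoc, Category.assoc, Limits.Pi.map_π, opCoproductIsoProduct_hom_comp_π,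
    ← Category.assoc, opCoproductIsoProduct_hom_comp_π, ← op_comp, ← op_comp, Limits.Sigma.ι_map]

end Localization

section TelescopeMap

variable {C : Type*} [Category* C] [Preadditive C] [HasColimitsOfShape (Discrete ℕ) C]

/-- The map `1 - shift` on `∐ Y` attached to a sequence `Y 0 ⟶ Y 1 ⟶ ⋯`, whose cone in a
triangulated category is the homotopy colimit of the sequence. -/
noncomputable def telescopeMap {Y : ℕ → C} (t : ∀ n, Y n ⟶ Y (n + 1)) : ∐ Y ⟶ ∐ Y :=
  𝟙 _ - Limits.Sigma.desc fun n => t n ≫ Limits.Sigma.ι Y (n + 1)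

lemma ι_telescopeMap {Y : ℕ → C} (t : ∀ n, Y n ⟶ Y (n + 1)) (n : ℕ) :
    Limits.Sigma.ι Y n ≫ telescopeMap t =
      Limits.Sigma.ι Y n - t n ≫ Limits.Sigma.ι Y (n + 1) := by
  rw [telescopeMap, Preadditive.comp_sub, Category.comp_id, Limits.Sigma.ι_desc]

lemma telescopeMap_naturality {X Y : ℕ → C} {s : ∀ n, X n ⟶ X (n + 1)}
    {t : ∀ n, Y n ⟶ Y (n + 1)} (f : ∀ n, X n ⟶ Y n) (hf : ∀ n, s n ≫ f (n + 1) = f n ≫ t n) :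
    telescopeMap s ≫ Limits.Sigma.map f = Limits.Sigma.map f ≫ telescopeMap t := by
  refine Limits.Sigma.hom_ext _ _ fun n => ?_
  rw [reassoc_of% ι_telescopeMap, Limits.Sigma.ι_map_assoc, ι_telescopeMap, Preadditive.sub_comp,
    Preadditive.comp_sub, Category.assoc, Limits.Sigma.ι_map, Limits.Sigma.ι_map,
    reassoc_of% hf n]

/-- The telescope map of a constant sequence `M` is a split monomorphism onto a complement of the
zeroth summand; its retraction sends the `n`-th summand to minus the sum of the inclusions of the
summands before it. -/
noncomputable def biprodIsoOfConstTelescope [HasBinaryBiproducts C] (M : C) :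
    (∐ fun _ : ℕ => M) ⊞ M ≅ ∐ fun _ : ℕ => M where
  hom := biprod.desc (telescopeMap fun _ => 𝟙 M) (Limits.Sigma.ι (fun _ => M) 0)
  inv := biprod.lift
    (Limits.Sigma.desc fun n => -∑ k ∈ Finset.range n, Limits.Sigma.ι (fun _ : ℕ => M) k)
    (Limits.Sigma.desc fun _ => 𝟙 M)
  hom_inv_id := by
    ext n
    · simp [reassoc_of% ι_telescopeMap, Finset.sum_range_succ]
    · simp [reassoc_of% ι_telescopeMap]
    · simp
    · simp
  inv_hom_id := by
    refine Limits.Sigma.hom_ext _ _ fun n => ?_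
    simp [Preadditive.sum_comp, ι_telescopeMap, -Finset.sum_sub_distrib,
      Finset.sum_range_sub' (Limits.Sigma.ι fun _ => M)]

end TelescopeMap

variable {T : Type*} [Category* T] [Preadditive T] [HasZeroObject T] [HasShift T ℤ]
  [∀ n : ℤ, (shiftFunctor T n).Additive] [Pretriangulated T] [HasColimitsOfShape (Discrete ℕ) T]
  (P : ObjectProperty T) [P.IsClosedUnderIsomorphisms]

lemma prop_of_trW_telescopeMap_const {M : T}
    (h : P.trW (telescopeMap fun _ => 𝟙 M)) : P M := by
  have trW_inl : P.trW (biprod.inl : (∐ fun _ : ℕ => M) ⟶ (∐ fun _ : ℕ => M) ⊞ M) :=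
    (P.trW.arrow_mk_iso_iff (Arrow.isoMk' biprod.inl (telescopeMap fun _ => 𝟙 M) (Iso.refl _)
      (biprodIsoOfConstTelescope M) (by simp [biprodIsoOfConstTelescope]))).2 h
  exact (P.trW_iff_of_distinguished _ (binaryBiproductTriangle_distinguished _ M)).1 trW_inl

lemma prop_zero_of_isIso_telescopeMap [IsTriangulated T] [P.IsTriangulated]
    [P.IsClosedUnderColimitsOfShape (Discrete ℕ)] {Y : ℕ → T} (t : ∀ n, Y n ⟶ Y (n + 1))
    [IsIso (telescopeMap t)] (ht : ∀ n, P.trW (t n)) : P (Y 0) := by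
  let f (n : ℕ) : Y 0 ⟶ Y n := n.rec (𝟙 _) fun n fₙ => fₙ ≫ t n
  have trW_f (n : ℕ) : P.trW (f n) := by
    induction n with
    | zero => exact MorphismProperty.id_mem _ _
    | succ n ih => exact MorphismProperty.comp_mem _ _ _ ih (ht n)
  have trW_sigma_f : P.trW (Limits.Sigma.map f) := MorphismProperty.colimMap _ fun n => trW_f n.as
  refine prop_of_trW_telescopeMap_const P (trW_of_trW_postcomp P trW_sigma_f ?_)
  rw [telescopeMap_naturality f (t := t) fun n => Category.id_comp _]
  exact MorphismProperty.comp_mem _ _ _ trW_sigma_f (P.trW_of_isIso _)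

end Telescope

section Resolution

open DerivedCategory

variable {A : Type*} [Category* A] [Abelian A] [HasDerivedCategory.{w'} A]

lemma isZero_homologyFunctor_obj_single_shift (M : A) {n k : ℤ} (h : k ≠ -n) :
    IsZero ((homologyFunctor A k).obj (((singleFunctor A 0).obj M)⟦n⟧)) := by
  refine IsZero.of_iso (Y := (homologyFunctor A k).obj ((singleFunctor A (-n)).obj M)) ?_
    ((homologyFunctor A k).mapIso (((singleFunctors A).shiftIso n (-n) 0 (by simp)).app M))
  rcases lt_or_gt_of_ne h with h | h
  · exact isZero_of_isGE _ (-n) k h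
  · exact isZero_of_isLE _ (-n) k h

lemma homologyFunctor_map_single_shift_eq_zero {M N : A} {m n : ℤ} (hmn : m ≠ n)
    (t : ((singleFunctor A 0).obj M)⟦m⟧ ⟶ ((singleFunctor A 0).obj N)⟦n⟧) (k : ℤ) :
    (homologyFunctor A k).map t = 0 := by
  by_cases hk : k = -m
  · exact (isZero_homologyFunctor_obj_single_shift N (by omega)).eq_of_tgt _ _
  · exact (isZero_homologyFunctor_obj_single_shift M hk).eq_of_src _ _

section TrW

variable (P : ObjectProperty (DerivedCategory A)) [P.IsTriangulated]

lemma prop_single_X₂_of_shortExact [P.IsClosedUnderIsomorphisms] {S : ShortComplex A}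
    (hS : S.ShortExact) (h₁ : P ((singleFunctor A 0).obj S.X₁))
    (h₃ : P ((singleFunctor A 0).obj S.X₃)) : P ((singleFunctor A 0).obj S.X₂) :=
  P.ext_of_isTriangulatedClosed₂ _ hS.singleTriangle_distinguished h₁ h₃

lemma trW_singleδ {S : ShortComplex A} (hS : S.ShortExact)
    (h₂ : P ((singleFunctor A 0).obj S.X₂)) : P.trW hS.singleδ :=
  .mk _ (rot_of_distTriang _ (rot_of_distTriang _ hS.singleTriangle_distinguished))
    (P.le_shift 1 _ h₂)

lemma exists_trW_single_shift {S : ShortComplex A} (hS : S.ShortExact)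
    (h₂ : P ((singleFunctor A 0).obj S.X₂)) (n : ℕ) :
    ∃ t : ((singleFunctor A 0).obj S.X₃)⟦(n : ℤ)⟧ ⟶
      ((singleFunctor A 0).obj S.X₁)⟦((n + 1 : ℕ) : ℤ)⟧, P.trW t :=
  ⟨hS.singleδ⟦(n : ℤ)⟧' ≫
      (shiftFunctorAdd' (DerivedCategory A) 1 (n : ℤ) ((n + 1 : ℕ) : ℤ) (by omega)).inv.app _,
    MorphismProperty.comp_mem _ _ _ ((trW_singleδ P hS h₂).shift _) (P.trW_of_isIso _)⟩

end TrW

variable [HasColimitsOfShape (Discrete ℕ) A] [HasExactColimitsOfShape (Discrete ℕ) A]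

lemma isIso_telescopeMap_of_homologyFunctor_map_eq_zero {Y : ℕ → DerivedCategory A}
    (t : ∀ n, Y n ⟶ Y (n + 1)) (ht : ∀ n k, (homologyFunctor A k).map (t n) = 0) :
    IsIso (telescopeMap t) := by
  rw [DerivedCategory.isIso_iff]
  intro k
  have homology_map_eq_id : (homologyFunctor A k).map (telescopeMap t) = 𝟙 _ :=
    (isColimitOfPreserves (homologyFunctor A k) (coproductIsCoproduct Y)).hom_ext fun ⟨n⟩ => by
      change (homologyFunctor A k).map (Limits.Sigma.ι Y n) ≫ _ =
        (homologyFunctor A k).map (Limits.Sigma.ι Y n) ≫ 𝟙 _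
      rw [← Functor.map_comp, ι_telescopeMap, Functor.map_sub, Functor.map_comp, ht, zero_comp,
        sub_zero, Category.comp_id]
  rw [homology_map_eq_id]
  infer_instance

variable (P : ObjectProperty (DerivedCategory A)) [P.IsTriangulated] [P.IsClosedUnderIsomorphisms]
  [P.IsClosedUnderColimitsOfShape (Discrete ℕ)]

/-- Along the iterated connecting maps `M ⟶ K₁[1] ⟶ K₂[2] ⟶ ⋯` of the resolution every cone
lies in `P`, while every map vanishes on homology. -/
lemma prop_single_of_resolution (W : ObjectProperty A)
    (hW : ∀ M, W M → ∃ (K F : A) (f : K ⟶ F) (g : F ⟶ M) (w : f ≫ g = 0),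
      (ShortComplex.mk f g w).ShortExact ∧ W K ∧ P ((singleFunctor A 0).obj F))
    {M : A} (hM : W M) : P ((singleFunctor A 0).obj M) := by
  choose K F f g w hS hK hF using fun M : W.FullSubcategory => hW M.obj M.property
  let N (n : ℕ) : W.FullSubcategory := n.rec ⟨M, hM⟩ fun _ X => ⟨K X, hK X⟩
  let Y (n : ℕ) : DerivedCategory A := ((singleFunctor A 0).obj (N n).obj)⟦(n : ℤ)⟧
  choose t ht using fun n => exists_trW_single_shift P (hS (N n)) (hF (N n)) n
  have : IsIso (telescopeMap (Y := Y) t) :=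
    isIso_telescopeMap_of_homologyFunctor_map_eq_zero _ fun n k =>
      homologyFunctor_map_single_shift_eq_zero (by omega) (t n) k
  exact P.prop_of_iso ((shiftFunctorZero (DerivedCategory A) ℤ).app _)
    (prop_zero_of_isIso_telescopeMap P (Y := Y) t ht)

lemma prop_single_of_prop_single_biprod {M N : A} (h : P ((singleFunctor A 0).obj (M ⊞ N))) :
    P ((singleFunctor A 0).obj N) :=
  prop_single_of_resolution P (fun X => ∃ Y, P ((singleFunctor A 0).obj (Y ⊞ X)))
    (fun X ⟨Y, hYX⟩ => ⟨Y, Y ⊞ X, biprod.inl, biprod.snd, biprod.inl_snd,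
      (ShortComplex.Splitting.ofHasBinaryBiproduct Y X).shortExact,
      ⟨X, P.prop_of_iso ((singleFunctor A 0).mapIso (biprod.braiding Y X)) hYX⟩, hYX⟩) ⟨M, h⟩

lemma prop_single_biprod_iff (M N : A) : P ((singleFunctor A 0).obj (M ⊞ N)) ↔
    P ((singleFunctor A 0).obj M) ∧ P ((singleFunctor A 0).obj N) where
  mp h := ⟨prop_single_of_prop_single_biprod P (P.prop_of_iso
    ((singleFunctor A 0).mapIso (biprod.braiding M N)) h), prop_single_of_prop_single_biprod P h⟩
  mpr h := prop_single_X₂_of_shortExact P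
    (ShortComplex.Splitting.ofHasBinaryBiproduct M N).shortExact h.1 h.2

end Resolution

section Loc

variable {T : Type*} [Category* T] [Preadditive T] [HasZeroObject T] [HasShift T ℤ]
  [∀ n : ℤ, (shiftFunctor T n).Additive] [Pretriangulated T] (S : Set T)

lemma isLocalizingSub_loc : IsLocalizingSub.{w} (Loc.{w} S) where
  zero_mem _ hL := hL.1.zero_mem
  mem_of_iso e hx _ hL := hL.1.mem_of_iso e (hx _ hL)
  shift_mem n _ hx _ hL := hL.1.shift_mem n (hx _ hL)
  cone_mem Tr hTr h₁ h₂ _ hL := hL.1.cone_mem Tr hTr (h₁ _ hL) (h₂ _ hL)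
  coprod_mem f c hc hf _ hL := hL.1.coprod_mem f c hc fun i => hf i _ hL

lemma subset_loc : S ⊆ Loc.{w} S := fun _ hx _ hL => hL.2 hx

variable {S} in
lemma loc_subset_loc {S' : Set T} (h : S ⊆ Loc.{w} S') : Loc.{w} S ⊆ Loc.{w} S' :=
  fun _ hx => hx _ ⟨isLocalizingSub_loc S', h⟩

/-- Membership in `Loc S` as a property of objects, which is the form in which Mathlib treats
triangulated subcategories. -/
def locProperty : ObjectProperty T := fun X => X ∈ Loc.{w} S

instance : (locProperty.{w} S).IsClosedUnderIsomorphisms where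
  of_iso e h := (isLocalizingSub_loc S).mem_of_iso e h

instance : (locProperty.{w} S).ContainsZero :=
  ⟨⟨0, isZero_zero _, (isLocalizingSub_loc S).zero_mem⟩⟩

instance : (locProperty.{w} S).IsStableUnderShift ℤ :=
  ⟨fun n => ⟨fun _ hX => (isLocalizingSub_loc S).shift_mem n hX⟩⟩

instance : (locProperty.{w} S).IsTriangulatedClosed₃ :=
  .mk' (isLocalizingSub_loc S).cone_mem

instance : (locProperty.{w} S).IsTriangulatedClosed₂ :=
  .of_isTriangulatedClosed₃

instance : (locProperty.{w} S).IsTriangulated where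

instance {ι : Type*} [Small.{w} ι] :
    (locProperty.{w} S).IsClosedUnderColimitsOfShape (Discrete ι) := by
  have : (locProperty.{w} S).IsClosedUnderColimitsOfShape (Discrete (Shrink.{w} ι)) :=
    ⟨fun _ ⟨h⟩ => (isLocalizingSub_loc S).coprod_mem (fun i => h.diag.obj ⟨i⟩)
      ((Cocone.precompose Discrete.natIsoFunctor.inv).obj (.mk _ h.ι))
      ((IsColimit.precomposeInvEquiv _ _).symm h.isColimit) fun i => h.prop_diag_obj ⟨i⟩⟩
  exact .of_equivalence (Discrete.equivalence (equivShrink ι).symm)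

end Loc

section Modules

variable {R : Type u} [CommRing R]

section QuotientCover

variable {I : Ideal R} {M : Type u} [AddCommGroup M] [Module R M]

/-- For `M` annihilated by `I`, the map from a direct sum of copies of `R ⧸ I` indexed by the
elements of `M` which sends the generator of the `m`-th copy to `m`; it is the first step of a
resolution of `M` by such sums. -/
noncomputable def quotientCover (hM : I ≤ Module.annihilator R M) :
    (DirectSum M fun _ => R ⧸ I) →ₗ[R] M :=
  letI := Classical.decEq M
  DirectSum.toModule R M M fun m => I.liftQ (LinearMap.toSpanSingleton R M m) fun _ hr =>
    Module.mem_annihilator.1 (hM hr) m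

lemma quotientCover_surjective (hM : I ≤ Module.annihilator R M) :
    Function.Surjective (quotientCover hM) := by
  let := Classical.decEq M
  intro m
  refine ⟨DirectSum.lof R M (fun _ => R ⧸ I) m (Submodule.Quotient.mk 1), ?_⟩
  exact (DirectSum.toModule_lof R m _).trans (one_smul R m)

end QuotientCover

lemma le_annihilator_ker_factor {I J K : Ideal R} (hIJ : I * J ≤ K) (hKI : K ≤ I) :
    J ≤ Module.annihilator R (LinearMap.ker (Submodule.factor hKI)) := by
  intro x hx
  rw [Module.mem_annihilator]
  rintro ⟨y, hy⟩
  obtain ⟨r, rfl⟩ := Submodule.Quotient.mk_surjective K y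
  have hr : r ∈ I := (Submodule.Quotient.mk_eq_zero I).1 hy
  exact Subtype.ext ((Submodule.Quotient.mk_eq_zero K).2 (hIJ (Ideal.mul_mem_mul_rev hr hx)))

variable [HasDerivedCategory.{w'} (ModuleCat.{u} R)] {S : Set (DerivedCategory (ModuleCat.{u} R))}

lemma smod_directSum_mem_loc {ι : Type u} {M : ι → Type u}
    [∀ i, AddCommGroup (M i)] [∀ i, Module R (M i)]
    (hM : ∀ i, smod R (ModuleCat.of R (M i)) ∈ Loc.{u} S) :
    smod R (ModuleCat.of R (DirectSum ι M)) ∈ Loc.{u} S := by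
  classical
  refine (locProperty.{u} S).prop_of_iso ((DerivedCategory.singleFunctor _ 0).mapIso
    (ModuleCat.coprodIsoDirectSum fun i => ModuleCat.of R (M i))) ?_
  exact (locProperty.{u} S).prop_of_isColimit
    (isColimitOfPreserves (DerivedCategory.singleFunctor _ 0) (colimit.isColimit _))
    fun i => hM i.as

lemma smod_mem_loc_of_le_annihilator {I : Ideal R}
    (hI : smod R (ModuleCat.of R (R ⧸ I)) ∈ Loc.{u} S) {M : Type u} [AddCommGroup M]
    [Module R M] (hM : I ≤ Module.annihilator R M) :
    smod R (ModuleCat.of R M) ∈ Loc.{u} S := by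
  have le_annihilator_directSum (N : ModuleCat.{u} R) :
      I ≤ Module.annihilator R (DirectSum N fun _ => R ⧸ I) :=
    (le_iInf fun _ => Ideal.annihilator_quotient.ge).trans Module.annihilator_dfinsupp.ge
  refine prop_single_of_resolution (locProperty.{u} S) (fun N => I ≤ Module.annihilator R N)
    (fun N hN => ?_) (M := ModuleCat.of R M) hM
  exact ⟨_, _, _, _, _, LinearMap.shortExact_shortComplexKer (quotientCover_surjective hN),
    (le_annihilator_directSum N).trans
      (LinearMap.annihilator_le_of_injective (Submodule.subtype _) (Submodule.subtype_injective _)),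
    smod_directSum_mem_loc fun _ => hI⟩

lemma smod_quotient_mem_loc_of_mul_le {I J K : Ideal R}
    (hI : smod R (ModuleCat.of R (R ⧸ I)) ∈ Loc.{u} S)
    (hJ : smod R (ModuleCat.of R (R ⧸ J)) ∈ Loc.{u} S) (hIJ : I * J ≤ K) (hKI : K ≤ I) :
    smod R (ModuleCat.of R (R ⧸ K)) ∈ Loc.{u} S :=
  prop_single_X₂_of_shortExact (locProperty.{u} S)
    (LinearMap.shortExact_shortComplexKer (Submodule.factor_surjective hKI))
    (smod_mem_loc_of_le_annihilator hJ (le_annihilator_ker_factor hIJ hKI)) hI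

lemma smod_prod_mem_loc_iff {M N : Type u} [AddCommGroup M] [Module R M]
    [AddCommGroup N] [Module R N] : smod R (ModuleCat.of R (M × N)) ∈ Loc.{u} S ↔
      smod R (ModuleCat.of R M) ∈ Loc.{u} S ∧ smod R (ModuleCat.of R N) ∈ Loc.{u} S :=
  ((locProperty.{u} S).prop_iff_of_iso ((DerivedCategory.singleFunctor _ 0).mapIso
    (ModuleCat.biprodIsoProd (.of R M) (.of R N)))).symm.trans
      (prop_single_biprod_iff (locProperty.{u} S) _ _)

lemma loc_pair_smod_eq_loc_prod (M N : Type u) [AddCommGroup M] [Module R M]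
    [AddCommGroup N] [Module R N] :
    Loc.{u} {smod R (ModuleCat.of R M), smod R (ModuleCat.of R N)} =
      Loc.{u} {smod R (ModuleCat.of R (M × N))} := by
  refine Set.Subset.antisymm (loc_subset_loc (Set.pair_subset_iff.2 ?_))
    (loc_subset_loc (Set.singleton_subset_iff.2 ?_))
  · exact smod_prod_mem_loc_iff.1 (subset_loc _ (Set.mem_singleton _))
  · exact smod_prod_mem_loc_iff.2 (Set.pair_subset_iff.1 (subset_loc _))

lemma loc_pair_smod_quotient_eq_loc {I J K : Ideal R} (hIJ : I * J ≤ K) (hK : K ≤ I ⊓ J) :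
    Loc.{u} {smod R (ModuleCat.of R (R ⧸ I)), smod R (ModuleCat.of R (R ⧸ J))} =
      Loc.{u} {smod R (ModuleCat.of R (R ⧸ K))} := by
  obtain ⟨hKI, hKJ⟩ := le_inf_iff.1 hK
  refine Set.Subset.antisymm (loc_subset_loc (Set.pair_subset_iff.2 ?_))
    (loc_subset_loc (Set.singleton_subset_iff.2 ?_))
  · have hK' : smod R (ModuleCat.of R (R ⧸ K)) ∈ Loc.{u} {smod R (ModuleCat.of R (R ⧸ K))} :=
      subset_loc _ (Set.mem_singleton _)
    exact ⟨smod_mem_loc_of_le_annihilator hK' (hKI.trans Ideal.annihilator_quotient.ge),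
      smod_mem_loc_of_le_annihilator hK' (hKJ.trans Ideal.annihilator_quotient.ge)⟩
  · exact smod_quotient_mem_loc_of_mul_le (subset_loc _ (Set.mem_insert _ _))
      (subset_loc _ (Set.mem_insert_of_mem _ rfl)) hIJ hKI

end Modules

theorem loc_pair_eq_loc_sum_eq_loc_mul_eq_loc_inf_general (R : Type u) [CommRing R]
    [HasDerivedCategory.{w'} (ModuleCat.{u} R)] (I J : Ideal R) :
    Loc.{u} {smod R (ModuleCat.of R (R ⧸ I)), smod R (ModuleCat.of R (R ⧸ J))} =
      Loc.{u} {smod R (ModuleCat.of R ((R ⧸ I) × (R ⧸ J)))} ∧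
    Loc.{u} {smod R (ModuleCat.of R (R ⧸ I)), smod R (ModuleCat.of R (R ⧸ J))} =
      Loc.{u} {smod R (ModuleCat.of R (R ⧸ (I * J)))} ∧
    Loc.{u} {smod R (ModuleCat.of R (R ⧸ I)), smod R (ModuleCat.of R (R ⧸ J))} =
      Loc.{u} {smod R (ModuleCat.of R (R ⧸ (I ⊓ J)))} :=
  ⟨loc_pair_smod_eq_loc_prod _ _, loc_pair_smod_quotient_eq_loc le_rfl Ideal.mul_le_inf,
    loc_pair_smod_quotient_eq_loc Ideal.mul_le_inf le_rfl⟩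

/-- Theorem: for finitely generated ideals `I`, `J` of `R`,
`Loc(R/I, R/J) = Loc(R/I ⊕ R/J) = Loc(R/(I·J)) = Loc(R/(I ∩ J))` in `D(R)`. -/
theorem loc_pair_eq_loc_sum_eq_loc_mul_eq_loc_inf (R : Type u) [CommRing R]
    [HasDerivedCategory.{w'} (ModuleCat.{u} R)]
    (I J : Ideal R) (hI : I.FG) (hJ : J.FG) :
    Loc.{u} {smod R (ModuleCat.of R (R ⧸ I)), smod R (ModuleCat.of R (R ⧸ J))} =
      Loc.{u} {smod R (ModuleCat.of R ((R ⧸ I) × (R ⧸ J)))} ∧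
    Loc.{u} {smod R (ModuleCat.of R (R ⧸ I)), smod R (ModuleCat.of R (R ⧸ J))} =
      Loc.{u} {smod R (ModuleCat.of R (R ⧸ (I * J)))} ∧
    Loc.{u} {smod R (ModuleCat.of R (R ⧸ I)), smod R (ModuleCat.of R (R ⧸ J))} =
      Loc.{u} {smod R (ModuleCat.of R (R ⧸ (I ⊓ J)))} :=
  loc_pair_eq_loc_sum_eq_loc_mul_eq_loc_inf_general R I J
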